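/- Let G be a connected graph with σ_2 ≥ t_2. Then t_1 ≥ t_2, i.e., the circumference of G is at least the order of a longest path in G. (Corollary 10) -/

import Mathlib

open SimpleGraph

variable {V : Type*}

/-- A set of vertices is independent in `G`. -/
def IsIndSet (G : SimpleGraph V) (s : Set V) : Prop :=
  ∀ ⦃u⦄, u ∈ s → ∀ ⦃v⦄, v ∈ s → ¬ G.Adj u v

/-- The number of end-vertices (vertices of degree one) of a subgraph `H`. -/
noncomputable def endVertexCount {G : SimpleGraph V} (H : G.Subgraph) : ℕ :=
  {v : V | v ∈ H.verts ∧ (H.neighborSet v).ncard = 1}.ncard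

/-- `H` is a cycle; a single vertex and a single edge are regarded as
simple cycles of orders 1 and 2, respectively. -/
def IsCycleSubgraph {G : SimpleGraph V} (H : G.Subgraph) : Prop :=
  H.Connected ∧ (H.verts.ncard ≤ 2 ∨ ∀ v ∈ H.verts, (H.neighborSet v).ncard = 2)

/-- `H` is a `k`-ended tree in `G`: a tree with at most `k` end-vertices (leaves);
a cycle is regarded as a 1-ended tree. -/
def IsKEndedTree (G : SimpleGraph V) (k : ℕ) (H : G.Subgraph) : Prop :=
  (H.coe.IsTree ∧ endVertexCount H ≤ k) ∨ (1 ≤ k ∧ IsCycleSubgraph H)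

/-- `t k`: the order of a largest `k`-ended tree in `G`. -/
noncomputable def maxKEndedOrder (G : SimpleGraph V) (k : ℕ) : ℕ :=
  sSup {n | ∃ H : G.Subgraph, IsKEndedTree G k H ∧ H.verts.ncard = n}

/-- `σ m`: the minimum degree sum over independent sets of `m` vertices of `G`,
and `+∞` if the independence number of `G` is less than `m`. -/
noncomputable def minDegreeSum (G : SimpleGraph V) [Fintype V] [DecidableRel G.Adj]
    (m : ℕ) : ℕ∞ :=
  ⨅ s ∈ {s : Finset V | s.card = m ∧ IsIndSet G ↑s}, (∑ v ∈ s, G.degree v : ℕ∞)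

/-!
Take a longest path `p` from `u` to `v`; we may assume that it has at least three vertices, as
smaller ones count as cycles. If `u` and `v` are adjacent, then `p` closes up to a cycle. Otherwise
`deg u + deg v ≥ σ_2 ≥ t_2 = |p|`, and all neighbours of `u` and `v` lie on `p`, so by Ore's
pigeonhole argument some edge `x y` of `p` has `u ~ y` and `x ~ v`; exchanging `x y` for these two
edges gives a cycle on the vertices of `p`. That `t_2` is the order of a longest path rests on the
fact that a `2`-ended tree is connected of maximum degree at most two, and hence is traversed by a
path: in a tree no degree exceeds the number of leaves.
-/

section Walk

variable {G : SimpleGraph V} {u v : V} {p : G.Walk u v}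

theorem ncard_verts_toSubgraph_of_isPath (hp : p.IsPath) :
    p.toSubgraph.verts.ncard = p.length + 1 := by
  classical
  have hverts : p.toSubgraph.verts = ↑p.support.toFinset := by ext; simp
  rw [hverts, Set.ncard_coe_finset, List.toFinset_card_of_nodup hp.support_nodup,
    Walk.length_support]

theorem ncard_verts_toSubgraph_of_isCycle {c : G.Walk u u} (hc : c.IsCycle) :
    c.toSubgraph.verts.ncard = c.length := by
  classical
  have hverts : c.toSubgraph.verts = ↑c.support.tail.toFinset := by
    ext w
    have hend := Walk.end_mem_tail_support hc.not_nil
    simp only [Walk.mem_verts_toSubgraph, List.coe_toFinset, Set.mem_ofPred_eq,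
      Walk.mem_support_iff, or_iff_right_iff_imp]
    exact fun hw => hw ▸ hend
  rw [hverts, Set.ncard_coe_finset, List.toFinset_card_of_nodup hc.support_nodup,
    List.length_tail, Walk.length_support, Nat.add_sub_cancel]

theorem isTree_coe_toSubgraph_of_isPath (hp : p.IsPath) : p.toSubgraph.coe.IsTree := by
  classical
  have hconn := p.toSubgraph_connected.coe
  have hverts : Nat.card p.toSubgraph.verts = p.length + 1 :=
    ncard_verts_toSubgraph_of_isPath hp
  have : Finite p.toSubgraph.verts := Nat.finite_of_card_ne_zero (by omega)
  have hedges : Nat.card p.toSubgraph.coe.edgeSet ≤ p.length := by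
    have hset : p.toSubgraph.edgeSet = ↑p.edges.toFinset := by ext; simp
    rw [Nat.card_coe_set_eq,
      ← Set.ncard_image_of_injective _ (Sym2.map.injective Subtype.val_injective),
      Subgraph.image_coe_edgeSet_coe, hset, Set.ncard_coe_finset, ← p.length_edges]
    exact List.toFinset_card_le _
  refine isTree_iff_connected_and_card.2
    ⟨hconn, le_antisymm ?_ hconn.card_vert_le_card_edgeSet_add_one⟩
  omega

theorem endVertexCount_toSubgraph_le_two (hp : p.IsPath) : endVertexCount p.toSubgraph ≤ 2 := by
  have hends : {w | w ∈ p.toSubgraph.verts ∧ (p.toSubgraph.neighborSet w).ncard = 1} ⊆ {u, v} := by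
    rintro w ⟨hw, hw1⟩
    obtain ⟨i, rfl, hi⟩ := Walk.mem_support_iff_exists_getVert.1 (p.mem_verts_toSubgraph.1 hw)
    by_contra hne
    have h0 : i ≠ 0 := by rintro rfl; simp at hne
    have hl : i ≠ p.length := by rintro rfl; simp at hne
    have := hp.ncard_neighborSet_toSubgraph_internal_eq_two h0 (lt_of_le_of_ne hi hl)
    omega
  exact (Set.ncard_le_ncard hends).trans <| (Set.ncard_insert_le u {v}).trans_eq (by simp)

theorem isKEndedTree_two_toSubgraph_of_isPath (hp : p.IsPath) : IsKEndedTree G 2 p.toSubgraph :=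
  Or.inl ⟨isTree_coe_toSubgraph_of_isPath hp, endVertexCount_toSubgraph_le_two hp⟩

theorem isKEndedTree_one_toSubgraph_of_isCycle {c : G.Walk u u} (hc : c.IsCycle) :
    IsKEndedTree G 1 c.toSubgraph :=
  Or.inr ⟨le_rfl, c.toSubgraph_connected, Or.inr fun _ hw =>
    hc.ncard_neighborSet_toSubgraph_eq_two (c.mem_verts_toSubgraph.1 hw)⟩

end Walk

section MaxKEndedOrder

variable [Finite V] {G : SimpleGraph V} {u v : V}

theorem IsKEndedTree.ncard_verts_le_maxKEndedOrder {k : ℕ} {H : G.Subgraph}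
    (hH : IsKEndedTree G k H) : H.verts.ncard ≤ maxKEndedOrder G k := by
  refine le_csSup ⟨Nat.card V, ?_⟩ ⟨H, hH, rfl⟩
  rintro _ ⟨K, -, rfl⟩
  exact Set.ncard_le_card K.verts

theorem length_add_one_le_maxKEndedOrder_two {p : G.Walk u v} (hp : p.IsPath) :
    p.length + 1 ≤ maxKEndedOrder G 2 := by
  rw [← ncard_verts_toSubgraph_of_isPath hp]
  exact (isKEndedTree_two_toSubgraph_of_isPath hp).ncard_verts_le_maxKEndedOrder

theorem length_le_maxKEndedOrder_one {c : G.Walk u u} (hc : c.IsCycle) :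
    c.length ≤ maxKEndedOrder G 1 := by
  rw [← ncard_verts_toSubgraph_of_isCycle hc]
  exact (isKEndedTree_one_toSubgraph_of_isCycle hc).ncard_verts_le_maxKEndedOrder

theorem length_add_one_le_maxKEndedOrder_one {p : G.Walk u v} (hp : p.IsPath)
    (hlen : p.length ≤ 1) : p.length + 1 ≤ maxKEndedOrder G 1 := by
  have hverts := ncard_verts_toSubgraph_of_isPath hp
  have hended : IsKEndedTree G 1 p.toSubgraph :=
    Or.inr ⟨le_rfl, p.toSubgraph_connected, Or.inl (by omega)⟩
  exact hverts ▸ hended.ncard_verts_le_maxKEndedOrder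

end MaxKEndedOrder

theorem minDegreeSum_two_le [Fintype V] {G : SimpleGraph V} [DecidableRel G.Adj] {u v : V}
    (huv : u ≠ v) (hadj : ¬ G.Adj u v) :
    minDegreeSum G 2 ≤ (G.degree u + G.degree v : ℕ) := by
  classical
  have hpair : ({u, v} : Finset V) ∈ {s : Finset V | s.card = 2 ∧ IsIndSet G ↑s} :=
    ⟨Finset.card_pair huv, by simp [IsIndSet, hadj, G.adj_comm v u]⟩
  refine (iInf₂_le _ hpair).trans_eq ?_
  rw [Finset.sum_pair huv, Nat.cast_add]

/-- `p` is a longest path of `G`: a path at least as long as every path of `G`, whatever its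
ends. The maximality confines the neighbours of `u` and `v` to `p`. -/
def IsLongestPath {G : SimpleGraph V} {u v : V} (p : G.Walk u v) : Prop :=
  p.IsPath ∧ ∀ ⦃x y : V⦄ (q : G.Walk x y), q.IsPath → q.length ≤ p.length

theorem exists_isLongestPath [Nonempty V] (G : SimpleGraph V) [Finite G.edgeSet] :
    ∃ (u v : V) (p : G.Walk u v), IsLongestPath p := by
  obtain ⟨u, v, p, hp, hmax⟩ := Walk.exists_isPath_forall_isPath_length_le_length G
  exact ⟨u, v, p, hp, fun x y => hmax x y⟩

namespace IsLongestPath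

variable {G : SimpleGraph V} {u v w : V} {p : G.Walk u v}

theorem reverse (hp : IsLongestPath p) : IsLongestPath p.reverse :=
  ⟨hp.1.reverse, by simpa using hp.2⟩

theorem mem_support_of_adj_start (hp : IsLongestPath p) (hw : G.Adj u w) : w ∈ p.support := by
  by_contra hnot
  have := hp.2 _ (hp.1.cons hnot (h := hw.symm))
  simp at this

theorem mem_support_of_adj_end (hp : IsLongestPath p) (hw : G.Adj v w) : w ∈ p.support := by
  simpa using hp.reverse.mem_support_of_adj_start hw

theorem mem_support_of_adj_of_ncard_neighborSet_le_two (hp : IsLongestPath p) {x : V}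
    (hx : x ∈ p.support) (hfin : (G.neighborSet x).Finite)
    (hdeg : (G.neighborSet x).ncard ≤ 2) (hw : G.Adj x w) : w ∈ p.support := by
  obtain ⟨i, rfl, hi⟩ := Walk.mem_support_iff_exists_getVert.1 hx
  rcases eq_or_ne i 0 with rfl | h0
  · exact hp.mem_support_of_adj_start (by simpa using hw)
  rcases eq_or_ne i p.length with rfl | hl
  · exact hp.mem_support_of_adj_end (by simpa using hw)
  have hpath := hp.1.ncard_neighborSet_toSubgraph_internal_eq_two h0 (lt_of_le_of_ne hi hl)
  have heq := Set.eq_of_subset_of_ncard_le (p.toSubgraph.neighborSet_subset (p.getVert i))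
    (hpath ▸ hdeg) hfin
  have hmem : w ∈ p.toSubgraph.neighborSet (p.getVert i) := heq ▸ hw
  exact p.mem_verts_toSubgraph.1 (p.toSubgraph.edge_vert hmem.symm)

theorem mem_support_of_preconnected [Finite V] (hp : IsLongestPath p) (hG : G.Preconnected)
    (hdeg : ∀ x, (G.neighborSet x).ncard ≤ 2) (w : V) : w ∈ p.support := by
  by_contra hw
  obtain ⟨q⟩ := hG u w
  obtain ⟨d, -, hfst, hsnd⟩ := q.exists_boundary_dart {x | x ∈ p.support} p.start_mem_support hw
  exact hsnd <|
    hp.mem_support_of_adj_of_ncard_neighborSet_le_two hfst (Set.toFinite _) (hdeg _) d.adj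

end IsLongestPath

theorem degree_le_card_leaves [Fintype V] {T : SimpleGraph V} [DecidableRel T.Adj]
    (hT : T.IsTree) (x : V) : T.degree x ≤ Finset.card {v | T.degree v = 1} := by
  classical
  rcases subsingleton_or_nontrivial V with _ | _
  · simp
  -- Sum this over `v ≠ x` and compare with `∑ v, T.degree v = 2 * (|V| - 1)`.
  have hterm (v : V) : 2 ≤ T.degree v + if T.degree v = 1 then 1 else 0 := by
    have := hT.connected.preconnected.degree_pos_of_nontrivial v
    split_ifs <;> omega
  have hsum : T.degree x + (Fintype.card V - 1) * 2 ≤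
      2 * T.edgeFinset.card + Finset.card {v | T.degree v = 1} := by
    rw [← sum_degrees_eq_twice_card_edges, Finset.card_filter, ← Finset.sum_add_distrib,
      ← Finset.add_sum_erase _ _ (Finset.mem_univ x), ← Finset.card_univ,
      ← Finset.card_erase_of_mem (Finset.mem_univ x)]
    exact add_le_add le_self_add (Finset.card_nsmul_le_sum _ _ 2 fun v _ => hterm v)
  have hedges := hT.card_edgeFinset
  omega

section Subgraph

variable {G : SimpleGraph V} {H : G.Subgraph}

theorem ncard_neighborSet_coe (x : H.verts) :
    (H.coe.neighborSet x).ncard = (H.neighborSet x).ncard :=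
  Nat.card_congr (Subgraph.coeNeighborSetEquiv x)

variable [Finite H.verts]

theorem exists_isPath_of_ncard_neighborSet_le_two (hH : H.Connected)
    (hdeg : ∀ x ∈ H.verts, (H.neighborSet x).ncard ≤ 2) :
    ∃ (u v : V) (p : G.Walk u v), p.IsPath ∧ p.toSubgraph.verts = H.verts := by
  have := hH.coe.nonempty
  obtain ⟨u, v, p, hp⟩ := exists_isLongestPath H.coe
  have hspan := hp.mem_support_of_preconnected hH.coe.preconnected
    fun x => (ncard_neighborSet_coe x).trans_le (hdeg x x.2)
  have hverts : p.toSubgraph.verts = Set.univ :=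
    Set.eq_univ_of_forall fun x => p.mem_verts_toSubgraph.2 (hspan x)
  refine ⟨_, _, p.map H.hom, hp.1.map H.hom_injective, ?_⟩
  rw [Walk.toSubgraph_map, Subgraph.map_verts, hverts, Set.image_univ]
  exact Subtype.range_coe

theorem ncard_neighborSet_le_endVertexCount (hH : H.coe.IsTree) {x : V} (hx : x ∈ H.verts) :
    (H.neighborSet x).ncard ≤ endVertexCount H := by
  classical
  have := Fintype.ofFinite H.verts
  have hdegree (y : H.verts) : H.coe.degree y = (H.neighborSet y).ncard := by
    rw [← ncard_neighborSet_coe, ← card_neighborSet_eq_degree, Set.fintypeCard_eq_ncard]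
  have hleaves : endVertexCount H = Finset.card {y | H.coe.degree y = 1} := by
    rw [endVertexCount, ← Set.ncard_coe_finset,
      ← Set.ncard_image_of_injective _ Subtype.val_injective]
    congr 1
    ext y
    simp [hdegree, and_comm]
  rw [hleaves, ← hdegree ⟨x, hx⟩]
  convert! degree_le_card_leaves hH ⟨x, hx⟩

theorem IsCycleSubgraph.ncard_neighborSet_le_two (hH : IsCycleSubgraph H) {x : V}
    (hx : x ∈ H.verts) : (H.neighborSet x).ncard ≤ 2 := by
  rcases hH.2 with hsmall | hreg
  · exact (Set.ncard_le_ncard (H.neighborSet_subset_verts x)).trans hsmall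
  · exact (hreg x hx).le

theorem IsKEndedTree.ncard_neighborSet_le {k : ℕ} (hH : IsKEndedTree G k H) {x : V}
    (hx : x ∈ H.verts) : (H.neighborSet x).ncard ≤ max 2 k := by
  rcases hH with ⟨htree, hends⟩ | ⟨-, hcycle⟩
  · exact (ncard_neighborSet_le_endVertexCount htree hx).trans (hends.trans (le_max_right 2 k))
  · exact (hcycle.ncard_neighborSet_le_two hx).trans (le_max_left 2 k)

theorem IsKEndedTree.exists_isPath_length_add_one_eq (hH : IsKEndedTree G 2 H) :
    ∃ (u v : V) (p : G.Walk u v), p.IsPath ∧ p.length + 1 = H.verts.ncard := by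
  have hconn : H.Connected := hH.elim (fun h => ⟨h.1.connected⟩) fun h => h.2.1
  obtain ⟨u, v, p, hp, hverts⟩ :=
    exists_isPath_of_ncard_neighborSet_le_two hconn fun _ => hH.ncard_neighborSet_le
  exact ⟨u, v, p, hp, by rw [← hverts, ncard_verts_toSubgraph_of_isPath hp]⟩

end Subgraph

theorem maxKEndedOrder_two_le_of_isLongestPath [Finite V] {G : SimpleGraph V} {u v : V}
    {p : G.Walk u v} (hp : IsLongestPath p) : maxKEndedOrder G 2 ≤ p.length + 1 := by
  refine csSup_le' ?_
  rintro _ ⟨H, hH, rfl⟩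
  obtain ⟨x, y, q, hq, hlen⟩ := hH.exists_isPath_length_add_one_eq
  exact hlen ▸ Nat.succ_le_succ (hp.2 q hq)

section Closing

variable {G : SimpleGraph V} {u v : V} {p : G.Walk u v}

open Classical in
theorem degree_start_le_card_adj_getVert_succ [Fintype (G.neighborSet u)]
    (hu : ∀ w, G.Adj u w → w ∈ p.support) :
    G.degree u ≤ ((Finset.range p.length).filter fun i => G.Adj u (p.getVert (i + 1))).card := by
  refine (Finset.card_le_card ?_).trans (Finset.card_image_le (f := fun i => p.getVert (i + 1)))
  intro w hw
  rw [mem_neighborFinset] at hw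
  obtain ⟨i, rfl, hi⟩ := Walk.mem_support_iff_exists_getVert.1 (hu w hw)
  obtain ⟨j, rfl⟩ := Nat.exists_eq_succ_of_ne_zero (show i ≠ 0 by rintro rfl; simp at hw)
  exact Finset.mem_image.2 ⟨j, by simpa using ⟨hi, hw⟩, rfl⟩

open Classical in
theorem degree_end_le_card_adj_getVert [Fintype (G.neighborSet v)]
    (hv : ∀ w, G.Adj v w → w ∈ p.support) :
    G.degree v ≤ ((Finset.range p.length).filter fun i => G.Adj v (p.getVert i)).card := by
  refine (Finset.card_le_card ?_).trans (Finset.card_image_le (f := p.getVert))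
  intro w hw
  rw [mem_neighborFinset] at hw
  obtain ⟨i, rfl, hi⟩ := Walk.mem_support_iff_exists_getVert.1 (hv w hw)
  have hl : i ≠ p.length := by rintro rfl; simp at hw
  exact Finset.mem_image.2 ⟨i, by simpa using ⟨lt_of_le_of_ne hi hl, hw⟩, rfl⟩

theorem exists_adj_getVert_succ_and_adj_getVert [Fintype (G.neighborSet u)]
    [Fintype (G.neighborSet v)] (hu : ∀ w, G.Adj u w → w ∈ p.support)
    (hv : ∀ w, G.Adj v w → w ∈ p.support) (hdeg : p.length < G.degree u + G.degree v) :
    ∃ i < p.length, G.Adj u (p.getVert (i + 1)) ∧ G.Adj v (p.getVert i) := by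
  classical
  have hcard := (Finset.card_range p.length).trans_lt <| hdeg.trans_le <|
    add_le_add (degree_start_le_card_adj_getVert_succ hu) (degree_end_le_card_adj_getVert hv)
  obtain ⟨i, hi⟩ := Finset.inter_nonempty_of_card_lt_card_add_card
    (Finset.filter_subset _ _) (Finset.filter_subset _ _) hcard
  simp only [Finset.mem_inter, Finset.mem_filter, Finset.mem_range] at hi
  exact ⟨i, hi.1.1, hi.1.2, hi.2.2⟩

theorem exists_isPath_of_adj_end_getVert (hp : p.IsPath) {i : ℕ} (hi : i < p.length)
    (hadj : G.Adj v (p.getVert i)) :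
    ∃ q : G.Walk (p.getVert (i + 1)) u, q.IsPath ∧ q.length = p.length := by
  -- Pósa rotation: follow `p` from its vertex `i + 1` to `v`, jump to vertex `i`, return to `u`.
  refine ⟨(p.drop (i + 1)).append (Walk.cons hadj (p.take i).reverse), ?_, ?_⟩
  · rw [Walk.isPath_def, Walk.support_append, Walk.support_cons, List.tail_cons,
      Walk.support_reverse, Walk.support_take, Walk.drop_support_eq_support_drop_min,
      min_eq_left hi]
    refine (((List.reverse_perm _).append_left _).trans List.perm_append_comm).nodup_iff.2 ?_
    rw [List.take_append_drop]
    exact hp.support_nodup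
  · simp only [Walk.length_append, Walk.length_cons, Walk.length_reverse, Walk.take_length,
      Walk.drop_length]
    omega

theorem isCycle_cons_of_isPath (hp : p.IsPath) (hlen : 2 ≤ p.length) (hadj : G.Adj v u) :
    (Walk.cons hadj p).IsCycle :=
  Walk.isCycle_iff_isPath_tail_and_le_length.2 ⟨by simpa using hp, by simpa using hlen⟩

theorem IsLongestPath.exists_isCycle [Fintype (G.neighborSet u)] [Fintype (G.neighborSet v)]
    (hp : IsLongestPath p) (hlen : 2 ≤ p.length)
    (hdeg : ¬ G.Adj u v → p.length < G.degree u + G.degree v) :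
    ∃ (x : V) (c : G.Walk x x), c.IsCycle ∧ c.length = p.length + 1 := by
  by_cases hadj : G.Adj u v
  · exact ⟨v, _, isCycle_cons_of_isPath hp.1 hlen hadj.symm, Walk.length_cons _ _⟩
  obtain ⟨i, hi, hui, hvi⟩ := exists_adj_getVert_succ_and_adj_getVert
    (fun _ => hp.mem_support_of_adj_start) (fun _ => hp.mem_support_of_adj_end) (hdeg hadj)
  obtain ⟨q, hq, hqlen⟩ := exists_isPath_of_adj_end_getVert hp.1 hi hvi
  exact ⟨u, _, isCycle_cons_of_isPath hq (hqlen ▸ hlen) hui, by rw [Walk.length_cons, hqlen]⟩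

end Closing

theorem corollary10_general [Fintype V] (G : SimpleGraph V) [DecidableRel G.Adj]
    (h : (maxKEndedOrder G 2 : ℕ∞) ≤ minDegreeSum G 2) :
    maxKEndedOrder G 2 ≤ maxKEndedOrder G 1 := by
  rcases isEmpty_or_nonempty V with _ | _
  · refine csSup_le' ?_
    rintro _ ⟨H, -, rfl⟩
    simp [Set.eq_empty_of_isEmpty]
  obtain ⟨u, v, p, hp⟩ := exists_isLongestPath G
  refine (maxKEndedOrder_two_le_of_isLongestPath hp).trans ?_
  rcases Nat.lt_or_ge 1 p.length with hlong | hshort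
  · have hdeg (hadj : ¬ G.Adj u v) : p.length < G.degree u + G.degree v := by
      have huv : u ≠ v := by
        rintro rfl
        simp [Walk.isPath_iff_nil.1 hp.1 |>.eq_nil] at hlong
      have hle : maxKEndedOrder G 2 ≤ G.degree u + G.degree v := by
        exact_mod_cast h.trans (minDegreeSum_two_le huv hadj)
      exact (length_add_one_le_maxKEndedOrder_two hp.1).trans hle
    obtain ⟨x, c, hc, hclen⟩ := hp.exists_isCycle hlong hdeg
    exact hclen ▸ length_le_maxKEndedOrder_one hc
  · exact length_add_one_le_maxKEndedOrder_one hp.1 hshort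

/-- **Corollary 10.** If `G` is connected and `σ_2 ≥ t_2`, then `t_1 ≥ t_2`,
i.e. the circumference of `G` is at least the order of a longest path. -/
theorem corollary10 [Fintype V] (G : SimpleGraph V) [DecidableRel G.Adj]
    (hG : G.Connected)
    (h : (maxKEndedOrder G 2 : ℕ∞) ≤ minDegreeSum G 2) :
    maxKEndedOrder G 1 ≥ maxKEndedOrder G 2 :=
  corollary10_general G h
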